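/- arXiv:0711.3863 — 2 statements merged into one kernel-verified Lean document; each statement's English description precedes it below -/
import Mathlib

section
/- The field H = ℚ(√5, √17) has narrow class number 1. -/
open NumberField Module
open scoped nonZeroDivisors

/-- The narrow class group of a number field `F`: the quotient of the group of invertible
fractional ideals of `F` by the subgroup of principal fractional ideals generated by
totally positive elements. -/
noncomputable def narrowClassGroup (F : Type*) [Field F] [NumberField F] :=
  (FractionalIdeal (𝓞 F)⁰ F)ˣ ⧸
    Subgroup.closure {I : (FractionalIdeal (𝓞 F)⁰ F)ˣ |
      ∃ x : F, (∀ τ : F →+* ℝ, 0 < τ x) ∧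
        (I : FractionalIdeal (𝓞 F)⁰ F) = FractionalIdeal.spanSingleton (𝓞 F)⁰ x}

/-- The narrow class number of a number field. -/
noncomputable def narrowClassNumber (F : Type*) [Field F] [NumberField F] : ℕ :=
  Nat.card (narrowClassGroup F)

theorem linearIndependent_one_sqrt_sqrt_mul {H : Type*} [Field H] [NumberField H] {a b : H}
    (ha : a ^ 2 = 5) (hb : b ^ 2 = 17) : LinearIndependent ℚ ![1, a, b, a * b] := by
  have indep_a : ∀ q r : ℚ, (q : H) + r * a = 0 → q = 0 ∧ r = 0 := by
    intro q r h
    have h' : q ^ 2 = r ^ 2 * 5 := by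
      have : (q : H) ^ 2 = (r : H) ^ 2 * 5 := by linear_combination (q - r * a) * h + r ^ 2 * ha
      exact_mod_cast this
    have hr : r = 0 := by
      by_contra hr
      have : ¬ IsSquare (5 : ℚ) := by norm_num
      exact this ⟨q / r, by field_simp; linarith⟩
    subst hr
    simpa using h'
  rw [Fintype.linearIndependent_iff]
  intro g hg
  simp only [Fin.sum_univ_four, Matrix.cons_val, Rat.smul_def] at hg
  have key : g 2 = 0 ∧ g 3 = 0 := by
    by_contra hne
    have hn : (g 2) ^ 2 - 5 * (g 3) ^ 2 ≠ 0 := by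
      intro h0
      have : ((g 2 : H) + g 3 * a) * (g 2 + (-g 3 : ℚ) * a) = 0 := by
        have : ((g 2) ^ 2 - 5 * (g 3) ^ 2 : H) = 0 := by exact_mod_cast h0
        push_cast
        linear_combination this - (g 3 : H) ^ 2 * ha
      rcases mul_eq_zero.mp this with h | h
      · exact hne (indep_a _ _ h)
      · have := indep_a _ _ h
        exact hne ⟨this.1, by simpa using this.2⟩
    set n := (g 2) ^ 2 - 5 * (g 3) ^ 2 with hn_def
    set u := g 0 * g 2 - 5 * g 1 * g 3 with hu
    set v := g 1 * g 2 - g 0 * g 3 with hv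
    have hb' : (n : H) * b = -(u + v * a) := by
      rw [hn_def, hu, hv]
      push_cast
      linear_combination (g 2 - g 3 * a) * hg + (g 1 * g 3 + (g 3) ^ 2 * b) * ha
    have hsq := indep_a (17 * n ^ 2 - u ^ 2 - 5 * v ^ 2) (-(2 * u * v)) (by
      push_cast
      linear_combination (n * b - (u + v * a)) * hb' - (n : H) ^ 2 * hb + (v : H) ^ 2 * ha)
    rcases mul_eq_zero.mp (neg_eq_zero.mp hsq.2) with h | h
    · have hu0 : u = 0 := by simpa using h
      have : ¬ IsSquare (85 : ℚ) := by norm_num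
      refine this ⟨5 * v / n, ?_⟩
      field_simp
      nlinarith [hsq.1]
    · have : ¬ IsSquare (17 : ℚ) := by norm_num
      refine this ⟨u / n, ?_⟩
      field_simp
      nlinarith [hsq.1]
  have h01 := indep_a (g 0) (g 1) (by simpa [key.1, key.2] using hg)
  intro i
  fin_cases i
  exacts [h01.1, h01.2, key.1, key.2]

/-- The basis `1, a, b, ab` of a biquadratic field generated by `a = √5` and `b = √17`. -/
noncomputable def sqrtBasis {H : Type*} [Field H] [NumberField H] {a b : H}
    (ha : a ^ 2 = 5) (hb : b ^ 2 = 17) (hdeg : finrank ℚ H = 4) : Basis (Fin 4) ℚ H :=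
  basisOfLinearIndependentOfCardEqFinrank (linearIndependent_one_sqrt_sqrt_mul ha hb)
    (by simp [hdeg])

section Biquadratic

variable {H : Type*} [Field H] [NumberField H] {a b : H}
    (ha : a ^ 2 = 5) (hb : b ^ 2 = 17) (hdeg : finrank ℚ H = 4)

theorem coe_sqrtBasis : ⇑(sqrtBasis ha hb hdeg) = ![1, a, b, a * b] :=
  coe_basisOfLinearIndependentOfCardEqFinrank _ _

theorem sqrtBasis_repr (p q r s : ℚ) :
    ⇑((sqrtBasis ha hb hdeg).repr (p + q * a + r * b + s * (a * b))) = ![p, q, r, s] := by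
  have : (p + q * a + r * b + s * (a * b) : H)
      = ∑ i, ![p, q, r, s] i • sqrtBasis ha hb hdeg i := by
    simp [Fin.sum_univ_four, coe_sqrtBasis, Rat.smul_def]
  rw [this, Basis.repr_sum_self]

include ha hb hdeg in
theorem exists_eq_sqrt_combination (x : H) :
    ∃ p q r s : ℚ, x = p + q * a + r * b + s * (a * b) := by
  have := (sqrtBasis ha hb hdeg).sum_repr x
  simp only [Fin.sum_univ_four, coe_sqrtBasis, Matrix.cons_val, Rat.smul_def, mul_one] at this
  exact ⟨_, _, _, _, this.symm⟩

theorem leftMulMatrix_sqrtBasis (p q r s : ℚ) :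
    Algebra.leftMulMatrix (sqrtBasis ha hb hdeg) (p + q * a + r * b + s * (a * b)) =
      !![p, 5 * q, 17 * r, 85 * s; q, p, 17 * s, 17 * r; r, 5 * s, p, 5 * q; s, r, q, p] := by
  have col (j : Fin 4) (p' q' r' s' : ℚ)
      (h : (p + q * a + r * b + s * (a * b)) * ![1, a, b, a * b] j =
        p' + q' * a + r' * b + s' * (a * b)) (i : Fin 4) :
      Algebra.leftMulMatrix (sqrtBasis ha hb hdeg) (p + q * a + r * b + s * (a * b)) i j =
        ![p', q', r', s'] i := by
    rw [Algebra.leftMulMatrix_eq_repr_mul, coe_sqrtBasis, h, sqrtBasis_repr]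
  have c0 := col 0 p q r s (by simp)
  have c1 := col 1 (5 * q) p (5 * s) r (by
    simp only [Matrix.cons_val]; push_cast; linear_combination (q + s * b) * ha)
  have c2 := col 2 (17 * r) (17 * s) p q (by
    simp only [Matrix.cons_val]; push_cast; linear_combination (r + s * a) * hb)
  have c3 := col 3 (85 * s) (17 * r) (5 * q) p (by
    simp only [Matrix.cons_val]; push_cast
    linear_combination (q * b + s * b ^ 2) * ha + (5 * s + r * a) * hb)
  ext i j
  fin_cases j
  · exact (c0 i).trans (by fin_cases i <;> rfl)
  · exact (c1 i).trans (by fin_cases i <;> rfl)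
  · exact (c2 i).trans (by fin_cases i <;> rfl)
  · exact (c3 i).trans (by fin_cases i <;> rfl)

include ha hb hdeg in
theorem trace_sqrt_combination (p q r s : ℚ) :
    Algebra.trace ℚ H (p + q * a + r * b + s * (a * b)) = 4 * p := by
  rw [Algebra.trace_eq_matrix_trace (sqrtBasis ha hb hdeg), leftMulMatrix_sqrtBasis]
  simp [Matrix.trace, Fin.sum_univ_four]
  ring

include ha hb hdeg in
theorem norm_five_add_sqrt_div_two : Algebra.norm ℚ ((5 + b) / 2) = 4 := by
  have : (5 + b) / 2 = ((5 / 2 : ℚ) + (0 : ℚ) * a + (1 / 2 : ℚ) * b + (0 : ℚ) * (a * b) : H) := by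
    push_cast; ring
  rw [this, Algebra.norm_eq_matrix_det (sqrtBasis ha hb hdeg), leftMulMatrix_sqrtBasis]
  simp [Matrix.det_succ_row_zero, Fin.sum_univ_succ, Fin.succAbove]
  norm_num

include ha in
theorem isIntegral_one_add_sqrt_five : IsIntegral ℤ ((1 + a) / 2) := by
  refine ⟨.X ^ 2 - .X - 1, by monicity!, ?_⟩
  simp
  linear_combination ha / 4

include hb in
theorem isIntegral_one_add_sqrt_seventeen : IsIntegral ℤ ((1 + b) / 2) := by
  refine ⟨.X ^ 2 - .X - 4, by monicity!, ?_⟩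
  simp
  linear_combination hb / 4

include ha hb hdeg in
theorem abs_discr_le : |discr H| ≤ 7225 := by
  obtain ⟨φ, hφ⟩ := (IsIntegralClosure.isIntegral_iff (A := 𝓞 H)).mp
    (isIntegral_one_add_sqrt_five ha)
  obtain ⟨ω, hω⟩ := (IsIntegralClosure.isIntegral_iff (A := 𝓞 H)).mp
    (isIntegral_one_add_sqrt_seventeen hb)
  have e : Free.ChooseBasisIndex ℤ (𝓞 H) ≃ Fin 4 := Fintype.equivFinOfCardEq <| by
    rw [← finrank_eq_card_chooseBasisIndex, RingOfIntegers.rank, hdeg]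
  let B := (RingOfIntegers.basis H).reindex e
  let v : Fin 4 → 𝓞 H := ![1, φ, ω, φ * ω]
  let C : Fin 4 → Fin 4 → ℚ :=
    ![![1, 0, 0, 0], ![1 / 2, 1 / 2, 0, 0], ![1 / 2, 0, 1 / 2, 0], ![1 / 4, 1 / 4, 1 / 4, 1 / 4]]
  have hC (i : Fin 4) : algebraMap (𝓞 H) H (v i) =
      C i 0 + C i 1 * a + C i 2 * b + C i 3 * (a * b) := by
    fin_cases i <;> simp [v, C, hφ, hω] <;> ring
  have htr (i j : Fin 4) : (Algebra.trace ℤ (𝓞 H) (v i * v j) : ℚ) =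
      4 * (C i 0 * C j 0 + 5 * (C i 1 * C j 1) + 17 * (C i 2 * C j 2) + 85 * (C i 3 * C j 3)) := by
    rw [Algebra.coe_trace_int, ← trace_sqrt_combination ha hb hdeg _
      (C i 0 * C j 1 + C i 1 * C j 0 + 17 * (C i 2 * C j 3 + C i 3 * C j 2))
      (C i 0 * C j 2 + C i 2 * C j 0 + 5 * (C i 1 * C j 3 + C i 3 * C j 1))
      (C i 0 * C j 3 + C i 3 * C j 0 + C i 1 * C j 2 + C i 2 * C j 1)]
    congr 1
    rw [RingOfIntegers.coe_eq_algebraMap, map_mul, hC, hC]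
    push_cast
    linear_combination (C i 1 * C j 1 + (C i 1 * C j 3 + C i 3 * C j 1) * b +
      C i 3 * C j 3 * b ^ 2) * ha +
      (C i 2 * C j 2 + 5 * C i 3 * C j 3 + (C i 2 * C j 3 + C i 3 * C j 2) * a) * hb
  have hv : Algebra.discr ℤ v = 7225 := by
    have hM : Algebra.traceMatrix ℤ v = !![4, 2, 2, 1; 2, 6, 1, 3; 2, 1, 18, 9; 1, 3, 9, 27] := by
      ext i j
      rw [Algebra.traceMatrix_apply, Algebra.traceForm_apply, ← Int.cast_inj (α := ℚ), htr]
      fin_cases i <;> fin_cases j <;> simp [C] <;> norm_num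
    rw [Algebra.discr_def, hM]
    simp [Matrix.det_succ_row_zero, Fin.sum_univ_succ, Fin.succAbove]
  have hdet := Algebra.discr_of_matrix_vecMul B (B.toMatrix v)
  have hBv : Matrix.vecMul B ((B.toMatrix v).map (algebraMap ℤ (𝓞 H))) = v := by
    ext1 j
    rw [← B.sum_toMatrix_smul_self v j]
    simp [Matrix.vecMul, dotProduct, mul_comm]
  rw [hBv, hv, discr_eq_discr] at hdet
  have h0 : (B.toMatrix v).det ≠ 0 := by
    intro h
    simp [h] at hdet
  have h1 : 1 ≤ (B.toMatrix v).det ^ 2 := by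
    have := sq_pos_of_ne_zero h0
    omega
  rw [abs_le]
  constructor <;> nlinarith

include ha hb hdeg in
theorem isTotallyReal_of_sqrt : IsTotallyReal H := by
  have real_of_sq (z : ℂ) (n : ℕ) (h : z ^ 2 = n) : starRingEnd ℂ z = z := by
    rw [Complex.conj_eq_iff_im]
    have hre := congrArg Complex.re h
    have him := congrArg Complex.im h
    simp [pow_two] at hre him
    by_contra hz
    have hr : z.re = 0 := by
      rcases mul_eq_zero.mp (show z.re * z.im = 0 by linarith) with h | h
      exacts [h, absurd h hz]
    have : 0 < z.im * z.im := mul_self_pos.mpr hz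
    have : (0 : ℝ) ≤ n := by positivity
    rw [hr] at hre
    linarith
  refine ⟨fun w ↦ ?_⟩
  rw [InfinitePlace.isReal_iff, ComplexEmbedding.isReal_iff]
  ext x
  obtain ⟨p, q, r, s, rfl⟩ := exists_eq_sqrt_combination ha hb hdeg x
  have h1 := real_of_sq (w.embedding a) 5 (by simp [← map_pow, ha, map_ofNat])
  have h2 := real_of_sq (w.embedding b) 17 (by simp [← map_pow, hb, map_ofNat])
  simp [ComplexEmbedding.conjugate_coe_eq, h1, h2]

theorem two_le_inertiaDeg_of_quadratic {K : Type*} [Field K] [NumberField K] {p : ℕ}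
    (hp : p.Prime) (P : Ideal (𝓞 K)) [P.IsPrime] [P.LiesOver (Ideal.span {(p : ℤ)})]
    (c : ℤ) (x : 𝓞 K) (hx : x ^ 2 - x = c) (h : ∀ y : ZMod p, y ^ 2 - y ≠ c) :
    2 ≤ P.inertiaDeg ℤ := by
  have hnorm := Ideal.natAbs_pow_inertiaDeg (p : ℤ) P
  rw [Int.natAbs_natCast] at hnorm
  by_contra! hlt
  obtain h0 | h1 : P.inertiaDeg ℤ = 0 ∨ P.inertiaDeg ℤ = 1 := by omega
  · rw [h0, pow_zero, eq_comm, Ideal.absNorm_eq_one_iff] at hnorm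
    exact Ideal.IsPrime.ne_top ‹_› hnorm
  · rw [h1, pow_one, Ideal.absNorm_apply, Submodule.cardQuot_apply] at hnorm
    have : Finite (𝓞 K ⧸ P) := Nat.finite_of_card_ne_zero (hnorm ▸ hp.ne_zero)
    have := Fintype.ofFinite (𝓞 K ⧸ P)
    let e := ZMod.ringEquivOfPrime (𝓞 K ⧸ P) hp (by rw [← Nat.card_eq_fintype_card, hnorm])
    apply h (e.symm (Ideal.Quotient.mk P x))
    rw [← map_pow, ← map_sub, ← map_pow, ← map_sub, hx, map_intCast, map_intCast]

theorem isPrincipal_of_absNorm_eq {R : Type*} [CommRing R] [IsDedekindDomain R]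
    [Module.Free ℤ R] [Module.Finite ℤ R] [CharZero R] {P : Ideal R} {x : R} (hx : x ∈ P)
    (h0 : Ideal.absNorm P ≠ 0)
    (h : Ideal.absNorm (Ideal.span {x}) = Ideal.absNorm P) : Submodule.IsPrincipal P := by
  obtain ⟨J, hJ⟩ := Ideal.dvd_iff_le.mpr ((Ideal.span_singleton_le_iff_mem P).mpr hx)
  rw [hJ, map_mul] at h
  have hJ1 : Ideal.absNorm J = 1 := (Nat.mul_eq_left h0).mp h
  rw [Ideal.absNorm_eq_one_iff] at hJ1
  rw [hJ1, Ideal.mul_top] at hJ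
  exact ⟨x, hJ.symm⟩

include ha hb hdeg in
theorem isPrincipal_of_liesOver_two (P : Ideal (𝓞 H)) [P.IsPrime]
    [P.LiesOver (Ideal.span {((2 : ℕ) : ℤ)})] (hP : Ideal.absNorm P = 4) :
    Submodule.IsPrincipal P := by
  have key (b' : H) (hb' : b' ^ 2 = 17) (x : 𝓞 H) (hx : algebraMap (𝓞 H) H x = (5 + b') / 2)
      (hxP : x ∈ P) : Submodule.IsPrincipal P := by
    refine isPrincipal_of_absNorm_eq hxP (by simp [hP]) ?_
    have h := Algebra.coe_norm_int x
    rw [RingOfIntegers.coe_eq_algebraMap, hx, norm_five_add_sqrt_div_two ha hb' hdeg] at h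
    have h' : Algebra.norm ℤ x = 4 := by exact_mod_cast h
    rw [Ideal.absNorm_span_singleton, h', hP]
    rfl
  have hint (b' : H) (hb' : b' ^ 2 = 17) : ∃ x : 𝓞 H, algebraMap (𝓞 H) H x = (5 + b') / 2 := by
    obtain ⟨ω, hω⟩ := (IsIntegralClosure.isIntegral_iff (A := 𝓞 H)).mp
      (isIntegral_one_add_sqrt_seventeen hb')
    exact ⟨ω + 2, by rw [map_add, hω, map_ofNat]; ring⟩
  obtain ⟨x, hx⟩ := hint b hb
  obtain ⟨y, hy⟩ := hint (-b) (by rw [neg_sq, hb])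
  have hxy : x * y = 2 := by
    apply FaithfulSMul.algebraMap_injective (𝓞 H) H
    rw [map_mul, hx, hy, map_ofNat]
    linear_combination -hb / 4
  have h2 : (2 : 𝓞 H) ∈ P := by
    have : ((2 : ℕ) : ℤ) ∈ P.under ℤ := by
      rw [← Ideal.over_def P (Ideal.span {((2 : ℕ) : ℤ)})]
      exact Ideal.mem_span_singleton_self _
    simpa [Ideal.under, Ideal.mem_comap] using this
  rw [← hxy] at h2
  rcases Ideal.IsPrime.mem_or_mem ‹_› h2 with h | h
  exacts [key b hb x hx h, key (-b) (by rw [neg_sq, hb]) y hy h]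

include ha hb hdeg in
theorem floor_minkowskiBound_le :
    ⌊(4 / Real.pi) ^ InfinitePlace.nrComplexPlaces H *
      ((finrank ℚ H).factorial / (finrank ℚ H : ℝ) ^ finrank ℚ H * √|(discr H : ℝ)|)⌋₊ ≤ 7 := by
  have := isTotallyReal_of_sqrt ha hb hdeg
  have hD : |(discr H : ℝ)| ≤ 7225 := by exact_mod_cast abs_discr_le ha hb hdeg
  have hs : √|(discr H : ℝ)| ≤ 85 := Real.sqrt_le_iff.mpr ⟨by norm_num, by linarith⟩
  rw [IsTotallyReal.nrComplexPlaces_eq_zero, hdeg, ← Nat.lt_succ_iff, Nat.floor_lt (by positivity)]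
  norm_num [Nat.factorial]
  linarith

include ha hb hdeg in
theorem isPrincipalIdealRing_of_sqrt : IsPrincipalIdealRing (𝓞 H) := by
  refine RingOfIntegers.isPrincipalIdealRing_of_isPrincipal_of_pow_le_of_mem_primesOver_of_mem_Icc
    fun p hpmem hp P ⟨hP, hPp⟩ hle ↦ ?_
  have hM := floor_minkowskiBound_le ha hb hdeg
  have hp7 := (Finset.mem_Icc.mp hpmem).2.trans hM
  replace hle := hle.trans hM
  obtain ⟨φ, hφ⟩ : ∃ φ : 𝓞 H, φ ^ 2 - φ = (1 : ℤ) := by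
    obtain ⟨φ, hφ⟩ := (IsIntegralClosure.isIntegral_iff (A := 𝓞 H)).mp
      (isIntegral_one_add_sqrt_five ha)
    refine ⟨φ, FaithfulSMul.algebraMap_injective (𝓞 H) H ?_⟩
    rw [map_sub, map_pow, hφ, map_intCast]
    push_cast
    linear_combination ha / 4
  obtain ⟨ω, hω⟩ : ∃ ω : 𝓞 H, ω ^ 2 - ω = (4 : ℤ) := by
    obtain ⟨ω, hω⟩ := (IsIntegralClosure.isIntegral_iff (A := 𝓞 H)).mp
      (isIntegral_one_add_sqrt_seventeen hb)
    refine ⟨ω, FaithfulSMul.algebraMap_injective (𝓞 H) H ?_⟩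
    rw [map_sub, map_pow, hω, map_intCast]
    push_cast
    linear_combination hb / 4
  have hp' : p = 2 ∨ p = 3 ∨ p = 5 ∨ p = 7 := by
    clear hPp hle hpmem
    interval_cases p <;> revert hp <;> decide
  have hf : 2 ≤ P.inertiaDeg ℤ := by
    rcases hp' with rfl | rfl | rfl | rfl
    · exact two_le_inertiaDeg_of_quadratic hp P _ _ hφ (by decide)
    · exact two_le_inertiaDeg_of_quadratic hp P _ _ hφ (by decide)
    · exact two_le_inertiaDeg_of_quadratic hp P _ _ hω (by decide)
    · exact two_le_inertiaDeg_of_quadratic hp P _ _ hφ (by decide)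
  have hpf := (Nat.pow_le_pow_right hp.pos hf).trans hle
  have hp2 : p = 2 := by
    have := hp.two_le
    nlinarith
  subst hp2
  have hf2 : P.inertiaDeg ℤ = 2 := by
    by_contra hne
    have := (Nat.pow_le_pow_right hp.pos (show 3 ≤ P.inertiaDeg ℤ by omega)).trans hle
    omega
  have hnorm := Ideal.natAbs_pow_inertiaDeg ((2 : ℕ) : ℤ) P
  rw [hf2] at hnorm
  exact isPrincipal_of_liesOver_two ha hb hdeg P hnorm.symm

include ha hb hdeg in
theorem exists_unit_neg_only_at (τ₀ : H →+* ℝ) :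
    ∃ u : (𝓞 H)ˣ, τ₀ u < 0 ∧ ∀ τ : H →+* ℝ, τ ≠ τ₀ → 0 < τ u := by
  wlog ha₀ : τ₀ a < 0 generalizing a
  · refine this (a := -a) (by rw [neg_sq, ha]) ?_
    have : τ₀ a ≠ 0 := by
      rw [map_ne_zero]
      rintro rfl
      norm_num at ha
    rw [map_neg, neg_lt_zero]
    exact lt_of_le_of_ne (not_lt.mp ha₀) this.symm
  wlog hb₀ : τ₀ b < 0 generalizing b
  · refine this (b := -b) (by rw [neg_sq, hb]) ?_
    have : τ₀ b ≠ 0 := by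
      rw [map_ne_zero]
      rintro rfl
      norm_num at hb
    rw [map_neg, neg_lt_zero]
    exact lt_of_le_of_ne (not_lt.mp hb₀) this.symm
  have hτa (τ : H →+* ℝ) : τ a ^ 2 = 5 := by rw [← map_pow, ha, map_ofNat]
  have hτb (τ : H →+* ℝ) : τ b ^ 2 = 17 := by rw [← map_pow, hb, map_ofNat]
  obtain ⟨x, hx⟩ := (IsIntegralClosure.isIntegral_iff (A := 𝓞 H)).mp
    ((isIntegral_one_add_sqrt_five ha).add (isIntegral_one_add_sqrt_seventeen hb))
  have hunit : x * (x ^ 3 - 4 * x ^ 2 - 5 * x + 18) = 1 := by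
    apply FaithfulSMul.algebraMap_injective (𝓞 H) H
    simp only [map_mul, map_add, map_sub, map_pow, map_ofNat, map_one, hx]
    have h4 : (((a + b) / 2) ^ 2 - 11 / 2) ^ 2 = (85 / 4 : H) := by
      have : ((a + b) / 2) ^ 2 - 11 / 2 = a * b / 2 := by linear_combination ha / 4 + hb / 4
      rw [this]
      linear_combination b ^ 2 / 4 * ha + 5 / 4 * hb
    linear_combination h4
  refine ⟨Units.mkOfMulEqOne x _ hunit, ?_, fun τ hτ ↦ ?_⟩
  · simp [hx, map_ofNat]
    nlinarith [hτa τ₀, hτb τ₀]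
  · simp [hx, map_ofNat]
    have h5 := hτa τ
    have h17 := hτb τ
    rcases lt_or_ge (τ a) 0 with hA | hA
    · rcases lt_or_ge (τ b) 0 with hB | hB
      · refine absurd ?_ hτ
        have hAeq : τ a = τ₀ a := by nlinarith [hτa τ₀]
        have hBeq : τ b = τ₀ b := by nlinarith [hτb τ₀]
        ext y
        obtain ⟨p, q, r, s, rfl⟩ := exists_eq_sqrt_combination ha hb hdeg y
        simp [hAeq, hBeq]
      · have : 4 < τ b := by nlinarith
        have : -3 < τ a := by nlinarith
        linarith
    · have : -(21 / 5) < τ b := by nlinarith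
      have : 11 / 5 < τ a := by nlinarith
      linarith

end Biquadratic

theorem exists_unit_mul_totally_positive {K : Type*} [Field K] [NumberField K]
    (h : ∀ τ₀ : K →+* ℝ, ∃ u : (𝓞 K)ˣ, τ₀ u < 0 ∧ ∀ τ : K →+* ℝ, τ ≠ τ₀ → 0 < τ u)
    {x : K} (hx : x ≠ 0) : ∃ u : (𝓞 K)ˣ, ∀ τ : K →+* ℝ, 0 < τ (u * x) := by
  classical
  have : Finite (K →+* ℝ) := Finite.of_injective (fun τ ↦ Complex.ofRealHom.comp τ)
    fun τ τ' hττ' ↦ RingHom.ext fun y ↦ Complex.ofReal_injective (RingHom.congr_fun hττ' y)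
  have := Fintype.ofFinite (K →+* ℝ)
  choose u hneg hpos using h
  refine ⟨∏ τ₀ with τ₀ x < 0, u τ₀, fun τ ↦ ?_⟩
  have hprod (s : Finset (K →+* ℝ)) :
      τ ((∏ τ₀ ∈ s, u τ₀ : (𝓞 K)ˣ) : 𝓞 K) = ∏ τ₀ ∈ s, τ (u τ₀ : 𝓞 K) := by
    simp [Units.coe_prod, map_prod]
  rw [map_mul, hprod]
  have hpos' (s : Finset (K →+* ℝ)) (hs : τ ∉ s) : 0 < ∏ τ₀ ∈ s, τ (u τ₀ : 𝓞 K) :=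
    Finset.prod_pos fun τ₀ hτ₀ ↦ hpos τ₀ τ (by rintro rfl; exact hs hτ₀)
  rcases lt_or_gt_of_ne ((map_ne_zero τ).mpr hx) with hlt | hgt
  · rw [← Finset.mul_prod_erase _ _ (Finset.mem_filter.mpr ⟨Finset.mem_univ τ, hlt⟩)]
    exact mul_pos_of_neg_of_neg
      (mul_neg_of_neg_of_pos (hneg τ) (hpos' _ (Finset.notMem_erase _ _))) hlt
  · exact mul_pos (hpos' _ (by simp [hgt.le])) hgt

theorem narrowClassNumber_eq_one_of_isPrincipalIdealRing {K : Type*} [Field K] [NumberField K]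
    [IsPrincipalIdealRing (𝓞 K)]
    (h : ∀ τ₀ : K →+* ℝ, ∃ u : (𝓞 K)ˣ, τ₀ u < 0 ∧ ∀ τ : K →+* ℝ, τ ≠ τ₀ → 0 < τ u) :
    narrowClassNumber K = 1 := by
  rw [narrowClassNumber, narrowClassGroup]
  refine Subgroup.index_eq_one.mpr (eq_top_iff.mpr fun I _ ↦ Subgroup.subset_closure ?_)
  obtain ⟨x, hx⟩ := (FractionalIdeal.isPrincipal_iff (I : FractionalIdeal (𝓞 K)⁰ K)).mp
    inferInstance
  have hx0 : x ≠ 0 := by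
    rintro rfl
    exact I.ne_zero (by rw [hx, FractionalIdeal.spanSingleton_zero])
  obtain ⟨u, hu⟩ := exists_unit_mul_totally_positive h hx0
  refine ⟨_, hu, ?_⟩
  rw [← FractionalIdeal.spanSingleton_mul_spanSingleton, ← hx,
    ← FractionalIdeal.coeIdeal_span_singleton,
    Ideal.span_singleton_eq_top.mpr u.isUnit, FractionalIdeal.coeIdeal_top, one_mul]

/-- The field `H = ℚ(√5, √17)` has narrow class number `1`. -/
theorem narrowClassNumber_sqrt5_sqrt17_eq_one
    (H : Type*) [Field H] [NumberField H]
    (a b : H) (ha : a ^ 2 = 5) (hb : b ^ 2 = 17) (hdeg : finrank ℚ H = 4) :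
    narrowClassNumber H = 1 := by
  have := isPrincipalIdealRing_of_sqrt ha hb hdeg
  exact narrowClassNumber_eq_one_of_isPrincipalIdealRing (exists_unit_neg_only_at ha hb hdeg)
end

section
/- The field ℚ(√2, √5) has narrow class number 1. -/
open NumberField Module
open scoped nonZeroDivisors

section Discriminant

variable {K : Type*} [Field K] [NumberField K]

theorem NumberField.abs_discr_le_of_discr_ne_zero {ι : Type*} [Fintype ι] [DecidableEq ι]
    (hι : Fintype.card ι = finrank ℚ K) (v : ι → 𝓞 K)
    (hv : Algebra.discr ℚ (fun i ↦ (v i : K)) ≠ 0) :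
    (|discr K| : ℚ) ≤ |Algebra.discr ℚ (fun i ↦ (v i : K))| := by
  have e : Module.Free.ChooseBasisIndex ℤ (𝓞 K) ≃ ι := Fintype.equivOfCardEq <| by
    rw [hι, ← RingOfIntegers.rank, finrank_eq_card_chooseBasisIndex]
  let B := (RingOfIntegers.basis K).reindex e
  have hmul : Algebra.discr ℤ v = (B.toMatrix v).det ^ 2 * discr K := by
    rw [← NumberField.discr_eq_discr K B, ← Matrix.det_transpose, ← Algebra.discr_of_matrix_mulVec]
    congr 1
    ext1 i
    simp only [Matrix.mulVec, dotProduct, Matrix.map_apply, Matrix.transpose_apply,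
      Basis.toMatrix_apply]
    simpa [Algebra.smul_def] using (B.sum_repr (v i)).symm
  have hcast : Algebra.discr ℚ (fun i ↦ (v i : K)) = (Algebra.discr ℤ v : ℤ) := by
    simp only [Algebra.discr_def]
    rw [← eq_intCast (Int.castRingHom ℚ), RingHom.map_det]
    congr 1
    ext i j
    simp [Algebra.traceMatrix_apply, Algebra.traceForm_apply, Algebra.coe_trace_int]
  rw [hcast] at hv ⊢
  norm_cast at hv ⊢
  rw [hmul, abs_mul, abs_of_nonneg (sq_nonneg (B.toMatrix v).det)]
  rw [hmul] at hv
  have : 0 < (B.toMatrix v).det ^ 2 := (sq_nonneg _).lt_of_ne' (left_ne_zero_of_mul hv)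
  exact le_mul_of_one_le_left (abs_nonneg _) this

theorem Algebra.trace_eq_zero_of_sq_eq_of_not_isSquare {F L : Type*} [Field F] [Field L]
    [Algebra F L] [FiniteDimensional F L] {x : L} {q : F} (hx : x ^ 2 = algebraMap F L q)
    (hq : ¬ IsSquare q) : Algebra.trace F L x = 0 := by
  have hmin : minpoly F x = Polynomial.X ^ 2 - Polynomial.C q :=
    (minpoly.eq_of_irreducible_of_monic
      (X_pow_sub_C_irreducible_of_prime Nat.prime_two fun r hr ↦ hq ⟨r, by rw [← hr, sq]⟩)
      (by simp [hx]) (Polynomial.monic_X_pow_sub_C q two_ne_zero)).symm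
  rw [trace_eq_finrank_mul_minpoly_nextCoeff, hmin,
    Polynomial.nextCoeff_of_natDegree_pos (by simp)]
  simp

end Discriminant

section SmallNorm

/-- If `f` has a root in `R` but not in `𝔽_p`, then no ideal of `R` has norm `p`. -/
theorem Ideal.absNorm_ne_of_root {R : Type*} [CommRing R] [IsDedekindDomain R] [Module.Free ℤ R]
    {f : Polynomial ℤ} {x : R} (hx : Polynomial.aeval x f = 0) {p : ℕ} (hp : p.Prime)
    (hf : ∀ y : ZMod p, Polynomial.aeval y f ≠ 0) (I : Ideal R) : Ideal.absNorm I ≠ p := by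
  intro hI
  have hcard : Nat.card (R ⧸ I) = p := hI
  have : Finite (R ⧸ I) := Nat.finite_of_card_ne_zero (hcard ▸ hp.ne_zero)
  have := Fintype.ofFinite (R ⧸ I)
  let e := ZMod.ringEquivOfPrime (R ⧸ I) hp (by rw [← Nat.card_eq_fintype_card, hcard])
  apply hf (e.symm (Ideal.Quotient.mk I x))
  let g : R →ₐ[ℤ] ZMod p := (e.symm.toRingHom.comp (Ideal.Quotient.mk I)).toIntAlgHom
  have := Polynomial.aeval_algHom_apply g x f
  rw [hx, map_zero] at this
  exact this

end SmallNorm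

section NarrowClassGroup

variable {F : Type*} [Field F] [NumberField F]

theorem NumberField.exists_unit_mul_totallyPositive
    (h : ∀ τ : F →+* ℝ, ∃ u : (𝓞 F)ˣ, τ u < 0 ∧ ∀ σ : F →+* ℝ, σ ≠ τ → 0 < σ u)
    {x : F} (hx : x ≠ 0) : ∃ u : (𝓞 F)ˣ, ∀ τ : F →+* ℝ, 0 < τ (u * x) := by
  classical
  choose u hneg hpos using h
  refine ⟨∏ σ with σ x < 0, u σ, fun τ ↦ ?_⟩
  have hprod : τ ((∏ σ with σ x < 0, u σ : (𝓞 F)ˣ) : 𝓞 F) = ∏ σ with σ x < 0, τ (u σ) := by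
    simp [Units.coe_prod, map_prod]
  rw [map_mul, hprod]
  have hrest : 0 < ∏ σ ∈ (Finset.univ.filter fun σ : F →+* ℝ ↦ σ x < 0).erase τ, τ (u σ) :=
    Finset.prod_pos fun σ hσ ↦ hpos σ τ (Finset.ne_of_mem_erase hσ).symm
  rcases lt_or_gt_of_ne ((map_ne_zero τ).mpr hx) with hτ | hτ
  · rw [← Finset.mul_prod_erase _ _ (Finset.mem_filter.mpr ⟨Finset.mem_univ τ, hτ⟩)]
    exact mul_pos_of_neg_of_neg (mul_neg_of_neg_of_pos (hneg τ) hrest) hτ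
  · rw [Finset.erase_eq_of_notMem (by simp [hτ.le])] at hrest
    exact mul_pos hrest hτ

theorem narrowClassNumber_eq_one_of_exists_unit [IsPrincipalIdealRing (𝓞 F)]
    (h : ∀ τ : F →+* ℝ, ∃ u : (𝓞 F)ˣ, τ u < 0 ∧ ∀ σ : F →+* ℝ, σ ≠ τ → 0 < σ u) :
    narrowClassNumber F = 1 := by
  have htop : Subgroup.closure {I : (FractionalIdeal (𝓞 F)⁰ F)ˣ |
      ∃ x : F, (∀ τ : F →+* ℝ, 0 < τ x) ∧
        (I : FractionalIdeal (𝓞 F)⁰ F) = FractionalIdeal.spanSingleton (𝓞 F)⁰ x} = ⊤ := by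
    refine eq_top_iff.mpr fun I _ ↦ Subgroup.subset_closure ?_
    obtain ⟨x, hx⟩ := (FractionalIdeal.isPrincipal_iff (I : FractionalIdeal (𝓞 F)⁰ F)).mp
      inferInstance
    have hx0 : x ≠ 0 := by
      rintro rfl
      simp at hx
    obtain ⟨u, hu⟩ := NumberField.exists_unit_mul_totallyPositive h hx0
    refine ⟨_, hu, ?_⟩
    rw [hx, ← FractionalIdeal.spanSingleton_mul_spanSingleton,
      ← FractionalIdeal.coeIdeal_span_singleton,
      Ideal.span_singleton_eq_top.mpr u.isUnit]
    simp
  rw [narrowClassNumber, narrowClassGroup, htop, Nat.card_eq_one_iff_unique]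
  exact ⟨QuotientGroup.subsingleton_quotient_top, inferInstance⟩

end NarrowClassGroup

section SqrtTwoSqrtFive

open Polynomial in
theorem isIntegral_one_add_div_two {L : Type*} [Field L] [CharZero L] {b : L} (hb : b ^ 2 = 5) :
    IsIntegral ℤ ((1 + b) / 2) := by
  refine ⟨X ^ 2 - X - 1, by monicity!, ?_⟩
  simp only [eval₂_sub, eval₂_X_pow, eval₂_X, eval₂_one]
  linear_combination hb / 4

variable {H : Type*} [Field H] [NumberField H] {a b : H}

theorem discr_sqrtTwo_sqrtFive (ha : a ^ 2 = 2) (hb : b ^ 2 = 5) (hdeg : finrank ℚ H = 4) :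
    Algebra.discr ℚ ![1, a, (1 + b) / 2, a * ((1 + b) / 2)] = 1600 := by
  have tr_one : Algebra.trace ℚ H 1 = 4 := by
    simpa [hdeg] using Algebra.trace_algebraMap (S := H) (1 : ℚ)
  have tr_a : Algebra.trace ℚ H a = 0 :=
    Algebra.trace_eq_zero_of_sq_eq_of_not_isSquare (q := 2) (by simp [ha])
      (by rw [Rat.isSquare_iff]; decide +kernel)
  have tr_b : Algebra.trace ℚ H b = 0 :=
    Algebra.trace_eq_zero_of_sq_eq_of_not_isSquare (q := 5) (by simp [hb])
      (by rw [Rat.isSquare_iff]; decide +kernel)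
  have tr_ab : Algebra.trace ℚ H (a * b) = 0 :=
    Algebra.trace_eq_zero_of_sq_eq_of_not_isSquare (q := 10)
      (by rw [mul_pow, ha, hb]; norm_num) (by rw [Rat.isSquare_iff]; decide +kernel)
  have tr_mul {x y : H} {p q r s p' q' r' s' : ℚ} (hx : x = p + q * a + r * b + s * (a * b))
      (hy : y = p' + q' * a + r' * b + s' * (a * b)) :
      Algebra.trace ℚ H (x * y) = 4 * (p * p' + 2 * q * q' + 5 * r * r' + 10 * s * s') := by
    have hxy : x * y = (p * p' + 2 * q * q' + 5 * r * r' + 10 * s * s') • (1 : H) +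
        (p * q' + q * p' + 5 * r * s' + 5 * s * r') • a +
        (p * r' + r * p' + 2 * q * s' + 2 * s * q') • b +
        (p * s' + s * p' + q * r' + r * q') • (a * b) := by
      simp only [hx, hy, Algebra.smul_def, map_add, map_mul, map_ofNat, eq_ratCast]
      linear_combination ((q + s * b) * (q' + s' * b) : H) * ha +
        ((r + s * a) * (r' + s' * a) + 2 * s * s' - a ^ 2 * s * s' : H) * hb
    simp only [hxy, map_add, map_smul, tr_one, tr_a, tr_b, tr_ab, smul_eq_mul]
    ring
  let C : Matrix (Fin 4) (Fin 4) ℚ :=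
    !![1, 0, 0, 0; 0, 1, 0, 0; 1 / 2, 0, 1 / 2, 0; 0, 1 / 2, 0, 1 / 2]
  have hC (i : Fin 4) : ![1, a, (1 + b) / 2, a * ((1 + b) / 2)] i =
      C i 0 + C i 1 * a + C i 2 * b + C i 3 * (a * b) := by
    fin_cases i <;> simp [C] <;> ring
  have hmat : Algebra.traceMatrix ℚ ![1, a, (1 + b) / 2, a * ((1 + b) / 2)] =
      !![4, 0, 2, 0; 0, 8, 0, 4; 2, 0, 6, 0; 0, 4, 0, 12] := by
    ext i j
    rw [Algebra.traceMatrix_apply, Algebra.traceForm_apply, tr_mul (hC i) (hC j)]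
    fin_cases i <;> fin_cases j <;> simp [C] <;> norm_num
  rw [Algebra.discr_def, hmat]
  simp [Matrix.det_succ_row_zero, Fin.sum_univ_succ, Fin.succAbove]
  norm_num

theorem ringHom_ext_sqrtTwo_sqrtFive (ha : a ^ 2 = 2) (hb : b ^ 2 = 5) (hdeg : finrank ℚ H = 4)
    {A : Type*} [Field A] [CharZero A] {f g : H →+* A} (hfa : f a = g a) (hfb : f b = g b) :
    f = g := by
  have hli : LinearIndependent ℚ ![1, a, (1 + b) / 2, a * ((1 + b) / 2)] := by
    by_contra h
    have := Algebra.discr_zero_of_not_linearIndependent ℚ h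
    rw [discr_sqrtTwo_sqrtFive ha hb hdeg] at this
    norm_num at this
  let B := basisOfLinearIndependentOfCardEqFinrank hli (by simp [hdeg])
  suffices f.toRatAlgHom.toLinearMap = g.toRatAlgHom.toLinearMap from
    RingHom.ext fun x ↦ LinearMap.congr_fun this x
  refine B.ext fun i ↦ ?_
  fin_cases i <;> simp [B, hfa, hfb, map_ofNat]

theorem isTotallyReal_sqrtTwo_sqrtFive (ha : a ^ 2 = 2) (hb : b ^ 2 = 5)
    (hdeg : finrank ℚ H = 4) : IsTotallyReal H where
  isReal w := by
    have hreal {x : ℂ} {r : ℝ} (hr : 0 ≤ r) (hx : x ^ 2 = r) : star x = x := by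
      have : x ^ 2 = (√r : ℂ) ^ 2 := by
        rw [hx, ← Complex.ofReal_pow, Real.sq_sqrt hr]
      rcases sq_eq_sq_iff_eq_or_eq_neg.mp this with h | h <;> simp [h]
    rw [← InfinitePlace.mk_embedding w, InfinitePlace.isReal_iff, InfinitePlace.mk_embedding]
    refine ringHom_ext_sqrtTwo_sqrtFive ha hb hdeg (hreal (r := 2) (by norm_num) ?_)
      (hreal (r := 5) (by norm_num) ?_)
    · rw [← map_pow, ha, map_ofNat]; simp
    · rw [← map_pow, hb, map_ofNat]; simp

theorem isPrincipalIdealRing_sqrtTwo_sqrtFive (ha : a ^ 2 = 2) (hb : b ^ 2 = 5)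
    (hdeg : finrank ℚ H = 4) : IsPrincipalIdealRing (𝓞 H) := by
  have := isTotallyReal_sqrtTwo_sqrtFive ha hb hdeg
  obtain ⟨α, hα⟩ : ∃ α : 𝓞 H, (α : H) = a :=
    ⟨⟨a, .of_pow two_pos <| by
      simpa [ha] using isIntegral_algebraMap (R := ℤ) (A := H) (x := 2)⟩, rfl⟩
  obtain ⟨φ, hφ⟩ : ∃ φ : 𝓞 H, (φ : H) = (1 + b) / 2 :=
    ⟨⟨_, isIntegral_one_add_div_two hb⟩, rfl⟩
  have hdiscr : |discr H| ≤ 1600 := by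
    have hv : (fun i ↦ ((![1, α, φ, α * φ] i : 𝓞 H) : H)) =
        ![1, a, (1 + b) / 2, a * ((1 + b) / 2)] := by
      ext i; fin_cases i <;> simp [hα, hφ]
    have h := abs_discr_le_of_discr_ne_zero (by simp [hdeg]) ![1, α, φ, α * φ]
      (by rw [hv, discr_sqrtTwo_sqrtFive ha hb hdeg]; norm_num)
    rw [hv, discr_sqrtTwo_sqrtFive ha hb hdeg, abs_of_pos (by norm_num : (0 : ℚ) < 1600)] at h
    exact_mod_cast h
  refine RingOfIntegers.isPrincipalIdealRing_of_isPrincipal_of_norm_le fun I hI ↦ ?_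
  have hlt : Ideal.absNorm (I : Ideal (𝓞 H)) < 4 := by
    have hsqrt : √|(discr H : ℝ)| ≤ 40 := by
      rw [Real.sqrt_le_left (by norm_num)]
      calc |(discr H : ℝ)| ≤ 1600 := by exact_mod_cast hdiscr
        _ = 40 ^ 2 := by norm_num
    rw [IsTotallyReal.nrComplexPlaces_eq_zero, hdeg] at hI
    have : (Ideal.absNorm (I : Ideal (𝓞 H)) : ℝ) < 4 := by
      refine hI.trans_lt ?_
      norm_num [Nat.factorial]
      linarith
    exact_mod_cast this
  have hroot : Polynomial.aeval φ (Polynomial.X ^ 2 - Polynomial.X - 1 : Polynomial ℤ) = 0 := by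
    ext
    simp [hφ]
    linear_combination hb / 4
  have hne (p : ℕ) (hp : p.Prime) (h : ∀ y : ZMod p, y ^ 2 - y - 1 ≠ 0) :=
    Ideal.absNorm_ne_of_root hroot hp (by simpa using h) I
  have h0 : Ideal.absNorm (I : Ideal (𝓞 H)) ≠ 0 := Ideal.absNorm_ne_zero_of_nonZeroDivisors I
  have h2 := hne 2 Nat.prime_two (by decide)
  have h3 := hne 3 Nat.prime_three (by decide)
  have h1 : Ideal.absNorm (I : Ideal (𝓞 H)) = 1 := by lia
  rw [Ideal.absNorm_eq_one_iff.mp h1]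
  exact top_isPrincipal

theorem exists_unit_neg_iff_sqrtTwo_sqrtFive (ha : a ^ 2 = 2) (hb : b ^ 2 = 5) :
    ∃ u : (𝓞 H)ˣ, ∀ σ : H →+* ℝ,
      (σ a < 0 → σ b < 0 → σ u < 0) ∧ (¬ (σ a < 0 ∧ σ b < 0) → 0 < σ u) := by
  obtain ⟨α, hα⟩ : ∃ α : 𝓞 H, (α : H) = a :=
    ⟨⟨a, .of_pow two_pos <| by
      simpa [ha] using isIntegral_algebraMap (R := ℤ) (A := H) (x := 2)⟩, rfl⟩
  obtain ⟨φ, hφ⟩ : ∃ φ : 𝓞 H, (φ : H) = (1 + b) / 2 :=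
    ⟨⟨_, isIntegral_one_add_div_two hb⟩, rfl⟩
  have hu : (φ + α) * (φ * (φ - α)) = 1 := by
    ext
    simp only [map_mul, map_add, map_sub, hα, hφ, map_one]
    linear_combination ((3 + b) / 8) * hb - (1 + b) / 2 * ha
  refine ⟨Units.mkOfMulEqOne _ _ hu, fun σ ↦ ?_⟩
  have hval : σ (Units.mkOfMulEqOne _ _ hu : 𝓞 H) = (1 + σ b) / 2 + σ a := by
    simp [hα, hφ, map_ofNat]
  rw [hval]
  have hσa : σ a ^ 2 = 2 := by rw [← map_pow, ha, map_ofNat]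
  have hσb : σ b ^ 2 = 5 := by rw [← map_pow, hb, map_ofNat]
  refine ⟨fun h1 h2 ↦ by nlinarith, fun h ↦ ?_⟩
  rcases lt_or_ge (σ a) 0 with h1 | h1
  · have h2 : 0 ≤ σ b := not_lt.mp fun h2 ↦ h ⟨h1, h2⟩
    have : -1.5 < σ a := by nlinarith
    have : 2.2 < σ b := by nlinarith
    linarith
  · have : 1.4 < σ a := by nlinarith
    have : -2.3 < σ b := by nlinarith
    linarith

theorem exists_unit_neg_at_sqrtTwo_sqrtFive (ha : a ^ 2 = 2) (hb : b ^ 2 = 5)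
    (hdeg : finrank ℚ H = 4) (τ : H →+* ℝ) :
    ∃ u : (𝓞 H)ˣ, τ u < 0 ∧ ∀ σ : H →+* ℝ, σ ≠ τ → 0 < σ u := by
  have sign {x : H} (hx : x ≠ 0) : ∃ y, y ^ 2 = x ^ 2 ∧ τ y < 0 := by
    rcases lt_or_gt_of_ne ((map_ne_zero τ).mpr hx) with h | h
    · exact ⟨x, rfl, h⟩
    · exact ⟨-x, neg_sq x, by simpa using h⟩
  have agree {σ : H →+* ℝ} {y : H} {n : ℕ} (hy : y ^ 2 = n) (hσ : σ y < 0) (hτ : τ y < 0) :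
      σ y = τ y := by
    have : σ y ^ 2 = τ y ^ 2 := by simp only [← map_pow, hy, map_natCast]
    rcases sq_eq_sq_iff_eq_or_eq_neg.mp this with h | h
    · exact h
    · linarith
  obtain ⟨a', ha', hτa⟩ := sign (x := a) (by rintro rfl; norm_num at ha)
  obtain ⟨b', hb', hτb⟩ := sign (x := b) (by rintro rfl; norm_num at hb)
  rw [ha] at ha'
  rw [hb] at hb'
  obtain ⟨u, hu⟩ := exists_unit_neg_iff_sqrtTwo_sqrtFive ha' hb'
  refine ⟨u, (hu τ).1 hτa hτb, fun σ hσ ↦ (hu σ).2 fun ⟨h1, h2⟩ ↦ hσ ?_⟩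
  exact ringHom_ext_sqrtTwo_sqrtFive ha' hb' hdeg (agree (n := 2) (by simp [ha']) h1 hτa)
    (agree (n := 5) (by simp [hb']) h2 hτb)

end SqrtTwoSqrtFive

/-- The field `ℚ(√2, √5)` has narrow class number `1`. -/
theorem narrowClassNumber_sqrt2_sqrt5_eq_one
    (H : Type*) [Field H] [NumberField H]
    (a b : H) (ha : a ^ 2 = 2) (hb : b ^ 2 = 5) (hdeg : finrank ℚ H = 4) :
    narrowClassNumber H = 1 := by
  have := isPrincipalIdealRing_sqrtTwo_sqrtFive ha hb hdeg
  exact narrowClassNumber_eq_one_of_exists_unit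
    (exists_unit_neg_at_sqrtTwo_sqrtFive ha hb hdeg)
end
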